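/- Every original customer has at least one visited copy: Suppose constraints (5) Σ_{i∈N̄_j} Σ_{m∈M_i} p_i^m · s_i^m = d_j for every j ∈ C; (6) Σ_{m∈M_j} y_j^m = q_j for all j ∈ C; and (7) s_j^m ≤ y_j^m · d_j / p_j^m for all j ∈ C and m ∈ M_j hold, with s_j^m ≥ 0, d_j > 0 and p_j^m ∈ (0,1]. Then for every j ∈ C, Σ_{i∈N̄_j} q_i ≥ 1; that is, at least one copy of every original customer is visited by some primary vehicle. -/

import Mathlib

open Finset

section OrderedSemifield

variable {R κ μ : Type*} [Semifield R] [LinearOrder R] [IsStrictOrderedRing R]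

theorem sum_mul_le_sum_mul_of_le_mul_div {M : Finset μ} {p s y : μ → R} {d : R}
    (hp : ∀ m ∈ M, 0 < p m) (hs : ∀ m ∈ M, s m ≤ y m * (d / p m)) :
    ∑ m ∈ M, p m * s m ≤ (∑ m ∈ M, y m) * d := by
  rw [sum_mul]
  refine sum_le_sum fun m hm => ?_
  rw [← le_div_iff₀' (hp m hm), mul_div_assoc]
  exact hs m hm

/-- Here `N` is the set of copies of a single original customer with demand `d`, and `M k` is the
set of modes of the copy `k`. A copy delivers at most `q k * d`, so together the copies can only
meet the demand `d` when the `q k` sum to at least `1`. -/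
theorem at_least_one_copy_visited_general {N : Finset κ} {M : κ → Finset μ} {d : R} (hd : 0 < d)
    {p y s : κ → μ → R} {q : κ → R} (hp : ∀ k ∈ N, ∀ m ∈ M k, 0 < p k m)
    (h_demand : d ≤ ∑ k ∈ N, ∑ m ∈ M k, p k m * s k m)
    (h_visit : ∀ k ∈ N, ∑ m ∈ M k, y k m ≤ q k)
    (h_time : ∀ k ∈ N, ∀ m ∈ M k, s k m ≤ y k m * (d / p k m)) :
    1 ≤ ∑ k ∈ N, q k := by
  have delivery_le : ∀ k ∈ N, ∑ m ∈ M k, p k m * s k m ≤ q k * d := fun k hk =>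
    (sum_mul_le_sum_mul_of_le_mul_div (hp k hk) (h_time k hk)).trans
      (mul_le_mul_of_nonneg_right (h_visit k hk) hd.le)
  refine le_of_mul_le_mul_right ?_ hd
  calc
    1 * d = d := one_mul d
    _ ≤ ∑ k ∈ N, ∑ m ∈ M k, p k m * s k m := h_demand
    _ ≤ ∑ k ∈ N, q k * d := sum_le_sum delivery_le
    _ = (∑ k ∈ N, q k) * d := (sum_mul N q d).symm

end OrderedSemifield

/-- Every original customer has at least one visited copy: under constraints
(5) `Σ_{i∈N̄_j} Σ_{m∈M_i} p_i^m · s_i^m = d_j`, (6) `Σ_{m∈M_j} y_j^m = q_j`,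
and (7) `s_j^m ≤ y_j^m · d_j / p_j^m`, with `s ≥ 0`, `d > 0` and
`p ∈ (0,1]`, every original customer (copies indexed by `K`) satisfies
`Σ_{i∈N̄_j} q_i ≥ 1`. Customer copies are `C = V × K`; `N̄_{(v,k)}` is
`{(v,k') : k' ∈ K}`; modes `M_{(v,k)} = {1,…,b v}` and demand `d v` are equal
on copies of the same original customer. -/
theorem at_least_one_copy_visited
    (V K : Type) [Fintype V] [Fintype K]
    [DecidableEq V] [DecidableEq K]
    [Nonempty V] [Nonempty K]
    (b : V → ℕ) (hb : ∀ v, 1 ≤ b v)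
    (d : V → ℝ) (hd : ∀ v, 0 < d v)
    (p : V × K → ℕ → ℝ)
    (hp : ∀ c m, m ∈ Finset.Icc 1 (b c.1) → 0 < p c m ∧ p c m ≤ 1)
    (q : V × K → ℝ) (hq01 : ∀ c, q c = 0 ∨ q c = 1)
    (y : V × K → ℕ → ℝ) (hy01 : ∀ c m, y c m = 0 ∨ y c m = 1)
    (s : V × K → ℕ → ℝ) (hs_nonneg : ∀ c m, 0 ≤ s c m)
    -- constraint (5)
    (h5 : ∀ c : V × K,
      ∑ k' : K, ∑ m ∈ Finset.Icc 1 (b c.1), p (c.1, k') m * s (c.1, k') m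
        = d c.1)
    -- constraint (6)
    (h6 : ∀ c : V × K, ∑ m ∈ Finset.Icc 1 (b c.1), y c m = q c)
    -- constraint (7)
    (h7 : ∀ (c : V × K), ∀ m ∈ Finset.Icc 1 (b c.1),
      s c m ≤ y c m * (d c.1 / p c m)) :
    ∀ c : V × K, 1 ≤ ∑ k' : K, q (c.1, k') := fun c =>
  at_least_one_copy_visited_general (hd c.1) (fun k _ m hm => (hp (c.1, k) m hm).1)
    (h5 c).ge (fun k _ => (h6 (c.1, k)).le) (fun k _ => h7 (c.1, k))
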